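/- Combining the pieces: let F̂, F: [0,R_max] → [0,1] be nondecreasing with sup_r |F(r) − F̂(r)| ≤ ε, let γ ≥ 0 be nondecreasing, let m ≥ 1, 0 ≤ k ≤ m, and define R_min = inf{r : F̂(r) ≥ k/m + ε}. Suppose for each r, the 'exceedance probability' q(r) = P[Bin(m, F(r)) ≤ k]. Then ∫_0^{R_max} q(r) γ(r) dr ≤ ∫_{R_min}^{R_max} e^{−m·d_KL(k/m || F̂(r) − ε)} γ(r) dr + γ(R_min)·R_min, provided F̂(r) − ε > k/m for all r > R_min. -/

import Mathlib

open MeasureTheory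

/-- The cdf of a binomial random variable: `P[Bin(m,p) ≤ k]`. -/
noncomputable def binomCdf (m k : ℕ) (p : ℝ) : ℝ :=
  ∑ j ∈ Finset.range (k + 1), (m.choose j : ℝ) * p ^ j * (1 - p) ^ (m - j)

/-- The binary Kullback–Leibler divergence `d_KL(a‖b)`. -/
noncomputable def dKL (a b : ℝ) : ℝ :=
  a * Real.log (a / b) + (1 - a) * Real.log ((1 - a) / (1 - b))

/-- The exponential-moment bound for the lower tail of a binomial variable. -/
lemma binomCdf_mul_pow_le {m k : ℕ} (hk : k ≤ m) {p t : ℝ} (hp0 : 0 ≤ p) (hp1 : p ≤ 1)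
    (ht0 : 0 ≤ t) (ht1 : t ≤ 1) :
    binomCdf m k p * t ^ k ≤ (p * t + (1 - p)) ^ m := by
  have hp : 0 ≤ 1 - p := by linarith
  rw [binomCdf, Finset.sum_mul, add_pow]
  refine (Finset.sum_le_sum fun j hj => ?_).trans
    (Finset.sum_le_sum_of_subset_of_nonneg
      (Finset.range_subset_range.2 (Nat.succ_le_succ hk)) fun j _ _ => by positivity)
  have hjk : j ≤ k := Nat.lt_succ_iff.1 (Finset.mem_range.1 hj)
  calc (m.choose j : ℝ) * p ^ j * (1 - p) ^ (m - j) * t ^ k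
      ≤ (m.choose j : ℝ) * p ^ j * (1 - p) ^ (m - j) * t ^ j :=
        mul_le_mul_of_nonneg_left (pow_le_pow_of_le_one ht0 ht1 hjk) (by positivity)
    _ = (p * t) ^ j * (1 - p) ^ (m - j) * (m.choose j : ℝ) := by rw [mul_pow]; ring

lemma binomCdf_le_one {m k : ℕ} (hk : k ≤ m) {p : ℝ} (hp0 : 0 ≤ p) (hp1 : p ≤ 1) :
    binomCdf m k p ≤ 1 := by
  simpa using binomCdf_mul_pow_le hk hp0 hp1 zero_le_one le_rfl

/-- The Chernoff bound for the lower tail, evaluated at any `x` between `k / m` and the success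
probability `p`. -/
lemma binomCdf_le_exp_neg_dKL {m k : ℕ} (hm : 1 ≤ m) (hk : k ≤ m) {p x : ℝ}
    (hkx : (k : ℝ) / m < x) (hxp : x ≤ p) (hp1 : p ≤ 1) :
    binomCdf m k p ≤ Real.exp (-(m : ℝ) * dKL ((k : ℝ) / m) x) := by
  have hm0 : (0 : ℝ) < m := by exact_mod_cast hm
  obtain ⟨a, ha⟩ : ∃ a : ℝ, a = (k : ℝ) / m := ⟨_, rfl⟩
  have hma : (m : ℝ) * a = k := by rw [ha]; field_simp
  have ha0 : 0 ≤ a := by rw [ha]; positivity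
  rw [← ha] at hkx ⊢
  have hx0 : 0 < x := ha0.trans_lt hkx
  have hp0 : 0 ≤ p := hx0.le.trans hxp
  have ha1 : 0 < 1 - a := by linarith
  rcases (hxp.trans hp1).eq_or_lt with rfl | hx1
  · refine (binomCdf_le_one hk hp0 hp1).trans (Real.one_le_exp ?_)
    have hlog := Real.log_nonpos ha0 hkx.le
    have : a * Real.log a ≤ 0 := mul_nonpos_of_nonneg_of_nonpos ha0 hlog
    simp only [dKL, div_one, sub_self, div_zero, Real.log_zero, mul_zero, add_zero]
    nlinarith
  have hx1' : 0 < 1 - x := by linarith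
  rcases ha0.eq_or_lt with rfl | hapos
  · have hk0 : k = 0 := by
      have : (k : ℝ) = 0 := by rw [← hma, mul_zero]
      exact_mod_cast this
    subst hk0
    have hexp : Real.exp (-(m : ℝ) * dKL 0 x) = (1 - x) ^ m := by
      rw [← Real.exp_log (pow_pos hx1' m), Real.log_pow]
      simp [dKL]
    rw [hexp]
    calc binomCdf m 0 p = (1 - p) ^ m := by simp [binomCdf]
      _ ≤ (1 - x) ^ m := pow_le_pow_left₀ (by linarith) (by linarith) m
  · obtain ⟨t, ht⟩ : ∃ t : ℝ, t = a * (1 - x) / (x * (1 - a)) := ⟨_, rfl⟩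
    have ht0 : 0 < t := by rw [ht]; positivity
    have ht1 : t ≤ 1 := by
      rw [ht, div_le_one (by positivity)]
      nlinarith
    have hbase : x * t + (1 - x) = (1 - x) / (1 - a) := by
      rw [ht]
      field_simp
      ring
    have hexp : Real.exp (-(m : ℝ) * dKL a x) * t ^ k = (x * t + (1 - x)) ^ m := by
      rw [hbase, ← Real.exp_log (pow_pos ht0 k),
        ← Real.exp_log (pow_pos (div_pos hx1' ha1) m), ← Real.exp_add, Real.log_pow,
        Real.log_pow, ht, dKL, Real.log_div (mul_pos hapos hx1').ne' (mul_pos hx0 ha1).ne',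
        Real.log_mul hapos.ne' hx1'.ne', Real.log_mul hx0.ne' ha1.ne',
        Real.log_div hapos.ne' hx0.ne', Real.log_div ha1.ne' hx1'.ne',
        Real.log_div hx1'.ne' ha1.ne', ← hma]
      congr 1
      ring
    refine le_of_mul_le_mul_right ?_ (pow_pos ht0 k)
    rw [hexp]
    refine (binomCdf_mul_pow_le hk hp0 hp1 ht0.le ht1).trans
      (pow_le_pow_left₀ ?_ ?_ m)
    · have : 0 ≤ p * t := by positivity
      linarith
    · nlinarith

/-- Combining the pieces: with `sup |F − F̂| ≤ ε`, `γ ≥ 0` nondecreasing,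
`R_min = inf{r : F̂(r) ≥ k/m + ε}`, and `q(r) = P[Bin(m, F(r)) ≤ k]`, one has
`∫_0^{R_max} q γ ≤ ∫_{R_min}^{R_max} e^{−m d_KL(k/m ‖ F̂(r)−ε)} γ + γ(R_min) R_min`,
provided `F̂(r) − ε > k/m` for all `r > R_min`. -/
theorem stmt_15 (Rmax : ℝ) (hRmax : 0 < Rmax)
    (F Fhat : ℝ → ℝ) (ε : ℝ) (hε : 0 ≤ ε)
    (hFmono : MonotoneOn F (Set.Icc 0 Rmax)) (hFhatmono : MonotoneOn Fhat (Set.Icc 0 Rmax))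
    (hF01 : ∀ r ∈ Set.Icc (0:ℝ) Rmax, F r ∈ Set.Icc (0:ℝ) 1)
    (hFhat01 : ∀ r ∈ Set.Icc (0:ℝ) Rmax, Fhat r ∈ Set.Icc (0:ℝ) 1)
    (hclose : ∀ r ∈ Set.Icc (0:ℝ) Rmax, |F r - Fhat r| ≤ ε)
    (γ : ℝ → ℝ) (hγ0 : ∀ r, 0 ≤ γ r) (hγmono : MonotoneOn γ (Set.Icc 0 Rmax))
    (m k : ℕ) (hm : 1 ≤ m) (hk : k ≤ m)
    (Rmin : ℝ)
    (hRmin : Rmin = sInf {r | r ∈ Set.Icc (0:ℝ) Rmax ∧ (k : ℝ) / m + ε ≤ Fhat r})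
    (hRminIcc : Rmin ∈ Set.Icc (0:ℝ) Rmax)
    (hstrict : ∀ r, Rmin < r → r ≤ Rmax → (k : ℝ) / m < Fhat r - ε)
    (q : ℝ → ℝ) (hq : ∀ r, q r = binomCdf m k (F r))
    (hint1 : IntervalIntegrable (fun r => q r * γ r) volume 0 Rmax)
    (hint2 : IntervalIntegrable
      (fun r => Real.exp (-(m : ℝ) * dKL ((k : ℝ) / m) (Fhat r - ε)) * γ r) volume Rmin Rmax) :
    ∫ r in (0:ℝ)..Rmax, q r * γ r ≤
      (∫ r in Rmin..Rmax, Real.exp (-(m : ℝ) * dKL ((k : ℝ) / m) (Fhat r - ε)) * γ r) +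
        γ Rmin * Rmin := by
  obtain ⟨h0, h1⟩ := hRminIcc
  have hmem : Rmin ∈ Set.uIcc 0 Rmax := by
    rw [Set.uIcc_of_le hRmax.le]
    exact ⟨h0, h1⟩
  have hleft := hint1.mono_set (Set.uIcc_subset_uIcc_left hmem)
  have hright := hint1.mono_set (Set.uIcc_subset_uIcc_right hmem)
  rw [← intervalIntegral.integral_add_adjacent_intervals hleft hright, add_comm]
  refine add_le_add
    (intervalIntegral.integral_mono_on_of_le_Ioo h1 hright hint2 fun r hr => ?_) ?_
  · have hrI : r ∈ Set.Icc (0 : ℝ) Rmax := ⟨h0.trans hr.1.le, hr.2.le⟩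
    refine mul_le_mul_of_nonneg_right ?_ (hγ0 r)
    rw [hq]
    refine binomCdf_le_exp_neg_dKL hm hk (hstrict r hr.1 hr.2.le) ?_ (hF01 r hrI).2
    linarith [(abs_le.1 (hclose r hrI)).1]
  · calc ∫ r in (0 : ℝ)..Rmin, q r * γ r ≤ ∫ _ in (0 : ℝ)..Rmin, γ Rmin := by
          refine intervalIntegral.integral_mono_on h0 hleft intervalIntegrable_const
            fun r hr => ?_
          have hrI : r ∈ Set.Icc (0 : ℝ) Rmax := ⟨hr.1, hr.2.trans h1⟩
          have hq1 : q r ≤ 1 := by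
            rw [hq]
            exact binomCdf_le_one hk (hF01 r hrI).1 (hF01 r hrI).2
          exact (mul_le_of_le_one_left (hγ0 r) hq1).trans (hγmono hrI ⟨h0, h1⟩ hr.2)
      _ = γ Rmin * Rmin := by simp [mul_comm]
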